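/- Let f be defined by f(x₁,x₂,a) = 1/(x₁ (log x₁)^{3/2}) on {x₁ > 3, |x₂| < 1, e⁻¹ < a < e}, f = c₀ on R₀ = [−1,1]×[−1,1]×[e⁻¹,e], and f = 0 elsewhere, with c₀ chosen so that ∫_G f dρ = 0. For N = 1,2,..., let g_N(x₁,x₂,a) = min(max(log|x₁|, −N), N). Then lim_{N→∞} ∫_G g_N f dρ = +∞. -/

import Mathlib

open MeasureTheory Real Filter Set
open scoped ENNReal

noncomputable section

/-- The group `G = ℝ² ⋊ ℝ⁺`, realized as triples `(x₁, x₂, a)` (only `a > 0` is relevant). -/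
abbrev G : Type := ℝ × ℝ × ℝ

/-- Group product `(x₁,x₂,a)·(x₁',x₂',a') = (x₁+a x₁', x₂+a x₂', a a')`. -/
def gMul (x y : G) : G := (x.1 + x.2.2 * y.1, x.2.1 + x.2.2 * y.2.1, x.2.2 * y.2.2)

/-- Group inverse `(x₁,x₂,a)⁻¹ = (−x₁/a, −x₂/a, 1/a)`. -/
def gInv (x : G) : G := (-x.1 / x.2.2, -x.2.1 / x.2.2, 1 / x.2.2)

/-- The identity `e = (0,0,1)`. -/
def gE : G := (0, 0, 1)

/-- The right Haar measure `dρ = a⁻¹ dx₁ dx₂ da` (supported where `a > 0`). -/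
def ρG : Measure G :=
  (volume : Measure G).withDensity fun x => ENNReal.ofReal (if 0 < x.2.2 then x.2.2⁻¹ else 0)

/-- The modular function `δ(x₁,x₂,a) = a⁻²`. -/
def deltaG (x : G) : ℝ := (x.2.2 ^ 2)⁻¹

/-- `|x| = √(x₁² + x₂²)`. -/
def normG (x : G) : ℝ := Real.sqrt (x.1 ^ 2 + x.2.1 ^ 2)

/-- `cosh r(x) = (a + a⁻¹ + a⁻¹|x|²)/2`. -/
def coshArg (x : G) : ℝ := (x.2.2 + x.2.2⁻¹ + x.2.2⁻¹ * (x.1 ^ 2 + x.2.1 ^ 2)) / 2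

/-- `r(x) ≥ 0` is determined by `cosh r(x) = coshArg x`; explicitly `r = arcosh (coshArg x)`. -/
def rG (x : G) : ℝ := Real.log (coshArg x + Real.sqrt (coshArg x ^ 2 - 1))

/-- The left-invariant distance `d(x,y) = r(x⁻¹y)`. -/
def dG (x y : G) : ℝ := rG (gMul (gInv x) y)

/-- The heat kernel
`p_t(x) = (8π^{3/2})⁻¹ δ(x)^{1/2} (r(x)/sinh r(x)) t^{−3/2} exp(−r(x)²/(4t))`,
with `r/sinh r := 1` at `x = e`. -/
def heatK (t : ℝ) (x : G) : ℝ :=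
  (8 * Real.pi ^ ((3 : ℝ)/2))⁻¹ * Real.sqrt (deltaG x) *
    (if rG x = 0 then 1 else rG x / Real.sinh (rG x)) *
    t ^ (-(3 : ℝ)/2) * Real.exp (-(rG x ^ 2) / (4 * t))

/-- Convolution `f ∗ p_t(x) = ∫ f(xy⁻¹) p_t(y) dρ(y)`. -/
def convHeat (f : G → ℝ) (t : ℝ) (x : G) : ℝ := ∫ y, f (gMul x (gInv y)) * heatK t y ∂ρG

/-- The heat maximal operator `Mf(x) = sup_{t>0} |f ∗ p_t(x)|` (valued in `ℝ≥0∞`). -/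
def maxHeat (f : G → ℝ) (x : G) : ℝ≥0∞ :=
  ⨆ (t : ℝ) (_ : 0 < t), ENNReal.ofReal |convHeat f t x|

/-- Calderón–Zygmund sets. -/
def IsCZ (R : Set G) : Prop :=
  ∃ c : G, ∃ L r : ℝ, 0 < c.2.2 ∧ 0 < L ∧ 0 < r ∧
    R = Set.Icc (c.1 - L/2) (c.1 + L/2) ×ˢ
        (Set.Icc (c.2.1 - L/2) (c.2.1 + L/2) ×ˢ
         Set.Icc (c.2.2 * Real.exp (-r)) (c.2.2 * Real.exp r)) ∧
    (r < 1 → Real.exp 2 * c.2.2 * r ≤ L ∧ L < Real.exp 8 * c.2.2 * r) ∧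
    (1 ≤ r → c.2.2 * Real.exp (2*r) ≤ L ∧ L < c.2.2 * Real.exp (8*r))

/-- Atoms: `A ∈ L¹(ρ)` supported in a Calderón–Zygmund set `R`, with
`‖A‖_∞ ≤ ρ(R)⁻¹` and `∫ A dρ = 0`. -/
def IsAtomG (A : G → ℝ) : Prop :=
  Integrable A ρG ∧
  ∃ R : Set G, IsCZ R ∧ (∀ x ∉ R, A x = 0) ∧
    eLpNorm A ⊤ ρG ≤ (ρG R)⁻¹ ∧
    ∫ x, A x ∂ρG = 0

/-- `f = Σ_j lam_j A_j` with atoms `A_j`, `Σ_j |lam_j| < ∞`, converging in `L¹(ρ)`. -/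
def IsH1Decomp (f : G → ℝ) (lam : ℕ → ℝ) (A : ℕ → G → ℝ) : Prop :=
  (∀ j, IsAtomG (A j)) ∧ Summable (fun j => |lam j|) ∧
  Tendsto (fun N => eLpNorm (fun x => f x - ∑ j ∈ Finset.range N, lam j * A j x) 1 ρG)
    atTop (nhds 0)

/-- The Hardy space `H¹`. -/
def MemH1 (f : G → ℝ) : Prop :=
  Integrable f ρG ∧ ∃ lam A, IsH1Decomp f lam A

/-- `‖f‖_{H¹} = inf Σ_j |lam_j|` over all atomic decompositions. -/
def H1norm (f : G → ℝ) : ℝ :=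
  sInf {s | ∃ lam A, IsH1Decomp f lam A ∧ s = ∑' j, |lam j|}

/-- The left-invariant vector field `X₀ = a ∂_a`. -/
def X0 (f : G → ℝ) (x : G) : ℝ := x.2.2 * deriv (fun s => f (x.1, x.2.1, s)) x.2.2

/-- The left-invariant vector field `X₁ = a ∂_{x₁}`. -/
def X1 (f : G → ℝ) (x : G) : ℝ := x.2.2 * deriv (fun s => f (s, x.2.1, x.2.2)) x.1

/-- The left-invariant vector field `X₂ = a ∂_{x₂}`. -/
def X2 (f : G → ℝ) (x : G) : ℝ := x.2.2 * deriv (fun s => f (x.1, s, x.2.2)) x.2.1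

/-- `‖∇p_t(x)‖`, the Euclidean norm of `(X₀p_t, X₁p_t, X₂p_t)` at `x`. -/
def gradHeatNorm (t : ℝ) (x : G) : ℝ :=
  Real.sqrt (X0 (heatK t) x ^ 2 + X1 (heatK t) x ^ 2 + X2 (heatK t) x ^ 2)

/-- The Poisson kernel `q_t(x) = π⁻² δ(x)^{1/2} (r(x)/sinh r(x)) · t/(t²+r(x)²)²`. -/
def poissonK (t : ℝ) (x : G) : ℝ :=
  (Real.pi ^ 2)⁻¹ * Real.sqrt (deltaG x) *
    (if rG x = 0 then 1 else rG x / Real.sinh (rG x)) *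
    (t / (t ^ 2 + rG x ^ 2) ^ 2)

/-- Convolution `f ∗ q_t(x) = ∫ f(xy⁻¹) q_t(y) dρ(y)`. -/
def convPoisson (f : G → ℝ) (t : ℝ) (x : G) : ℝ := ∫ y, f (gMul x (gInv y)) * poissonK t y ∂ρG

/-- The Poisson maximal operator `M̃f(x) = sup_{t>0} |f ∗ q_t(x)|`. -/
def maxPoisson (f : G → ℝ) (x : G) : ℝ≥0∞ :=
  ⨆ (t : ℝ) (_ : 0 < t), ENNReal.ofReal |convPoisson f t x|

/-- `G_{r₁}(x) = sup_{z ∈ B(x,r₁/2)} sup_{t>0} ‖∇p_t(z)‖`. -/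
def Gsup (r1 : ℝ) (x : G) : ℝ≥0∞ :=
  ⨆ (z : G) (_ : 0 < z.2.2 ∧ dG x z < r1 / 2) (t : ℝ) (_ : 0 < t),
    ENNReal.ofReal (gradHeatNorm t z)

/-- `R₀ = [−1,1]×[−1,1]×[e⁻¹,e]`. -/
def R0set : Set G :=
  Set.Icc (-1 : ℝ) 1 ×ˢ (Set.Icc (-1 : ℝ) 1 ×ˢ Set.Icc (Real.exp (-1)) (Real.exp 1))

/-- `R_L = [L−1,L+1]×[−1,1]×[e⁻¹,e]`. -/
def RLset (L : ℝ) : Set G :=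
  Set.Icc (L - 1) (L + 1) ×ˢ (Set.Icc (-1 : ℝ) 1 ×ˢ Set.Icc (Real.exp (-1)) (Real.exp 1))

/-- `f_L = χ_{R_L} − χ_{R₀}`. -/
def fL (L : ℝ) : G → ℝ := fun x =>
  (RLset L).indicator (fun _ => (1 : ℝ)) x - R0set.indicator (fun _ => (1 : ℝ)) x

/-- The mean of `g` over `R` with respect to `ρ`. -/
def czMean (g : G → ℝ) (R : Set G) : ℝ := (∫ x in R, g x ∂ρG) / (ρG R).toReal

/-- `‖g‖_{BMO} = sup_R ρ(R)⁻¹ ∫_R |g − g_R| dρ` over Calderón–Zygmund sets `R`. -/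
def czBMO (g : G → ℝ) : ℝ≥0∞ :=
  ⨆ (R : Set G) (_ : IsCZ R),
    (ρG R)⁻¹ * ∫⁻ x in R, ENNReal.ofReal |g x - czMean g R| ∂ρG

/-- `‖h‖_{BMO(ℝ)} = sup_Q |Q|⁻¹ ∫_Q |h − h_Q|` over bounded intervals `Q ⊂ ℝ`. -/
def lineBMO (h : ℝ → ℝ) : ℝ≥0∞ :=
  ⨆ (a : ℝ) (b : ℝ) (_ : a < b),
    (ENNReal.ofReal (b - a))⁻¹ *
      ∫⁻ s in Set.Icc a b, ENNReal.ofReal |h s - (∫ u in Set.Icc a b, h u) / (b - a)|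

/-- `2R₀ = [−2,2]×[−2,2]×[e⁻²,e²]`. -/
def twoR0set : Set G :=
  Set.Icc (-2 : ℝ) 2 ×ˢ (Set.Icc (-2 : ℝ) 2 ×ˢ Set.Icc (Real.exp (-2)) (Real.exp 2))

/-- The set `{x₁ > 3, |x₂| < 1, e⁻¹ < a < e}`. -/
def domSpecial : Set G :=
  {x : G | 3 < x.1 ∧ |x.2.1| < 1 ∧ Real.exp (-1) < x.2.2 ∧ x.2.2 < Real.exp 1}

/-- The function equal to `1/(x₁ (log x₁)^{3/2})` on `{x₁ > 3, |x₂| < 1, e⁻¹ < a < e}`,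
to `c₀` on `R₀`, and `0` elsewhere. -/
def fSpecial (c0 : ℝ) : G → ℝ := fun x =>
  domSpecial.indicator (fun y => (y.1 * Real.log y.1 ^ ((3 : ℝ)/2))⁻¹) x
    + R0set.indicator (fun _ => c0) x

def hAux (t : ℝ) : ℝ := (t * Real.log t ^ ((3 : ℝ)/2))⁻¹

def kAux (y : ℝ × ℝ) : ℝ :=
  (Set.Ioo (-1 : ℝ) 1).indicator (fun _ => (1 : ℝ)) y.1 *
    (Set.Ioo (Real.exp (-1)) (Real.exp 1)).indicator (fun _ => (1 : ℝ)) y.2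

def kdAux (y : ℝ × ℝ) : ℝ :=
  (Set.Ioo (-1 : ℝ) 1).indicator (fun _ => (1 : ℝ)) y.1 *
    (Set.Ioo (Real.exp (-1)) (Real.exp 1)).indicator (fun a => a⁻¹) y.2

def HAux (s : ℝ) (x : G) : ℝ := (Set.Ioi s).indicator hAux x.1 * kAux x.2

lemma hasDeriv_aux (t : ℝ) (ht : 1 < t) :
    HasDerivAt (fun t => -2 * Real.log t ^ (-(1 : ℝ)/2)) (hAux t) t := by
  have hl : 0 < Real.log t := Real.log_pos ht
  have h1 := (Real.hasDerivAt_log (by linarith : t ≠ 0)).rpow_const (p := -(1:ℝ)/2) (Or.inl hl.ne')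
  have h2 := h1.const_mul (-2)
  refine h2.congr_deriv ?_
  unfold hAux
  have : (-(1:ℝ)/2 - 1) = -((3:ℝ)/2) := by norm_num
  rw [this, Real.rpow_neg hl.le, mul_inv]
  ring

lemma hAux_nonneg (t : ℝ) (ht : 1 < t) : 0 ≤ hAux t := by
  have hl : 0 < Real.log t := Real.log_pos ht
  unfold hAux
  positivity

lemma tendsto_aux :
    Tendsto (fun t => -2 * Real.log t ^ (-(1 : ℝ)/2)) atTop (nhds 0) := by
  have h := (tendsto_rpow_neg_atTop (y := (1:ℝ)/2) (by norm_num)).comp Real.tendsto_log_atTop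
  have h2 := h.const_mul (-2)
  simp only [mul_zero] at h2
  refine h2.congr fun t => ?_
  simp [neg_div]

lemma hInt (s : ℝ) (hs : 3 ≤ s) : IntegrableOn hAux (Set.Ioi s) :=
  integrableOn_Ioi_deriv_of_nonneg' (fun t ht => hasDeriv_aux t (by
    have : s ≤ t := ht
    linarith)) (fun t ht => hAux_nonneg t (by
    have : s < t := ht
    linarith)) tendsto_aux

lemma hIntegral (s : ℝ) (hs : 3 ≤ s) :
    ∫ t in Set.Ioi s, hAux t = 2 * Real.log s ^ (-(1 : ℝ)/2) := by
  rw [integral_Ioi_of_hasDerivAt_of_nonneg' (fun t ht => hasDeriv_aux t (by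
    have : s ≤ t := ht
    linarith)) (fun t ht => hAux_nonneg t (by
    have : s < t := ht
    linarith)) tendsto_aux]
  ring

lemma invIntOn : IntegrableOn (fun a : ℝ => a⁻¹) (Set.Ioo (Real.exp (-1)) (Real.exp 1)) := by
  refine IntegrableOn.mono_set (t := Set.Icc (Real.exp (-1)) (Real.exp 1)) ?_ Ioo_subset_Icc_self
  apply ContinuousOn.integrableOn_Icc
  apply continuousOn_inv₀.mono
  intro a ha
  exact ((Real.exp_pos _).trans_le ha.1).ne'

lemma kdInt : Integrable kdAux := by
  have h1 : Integrable ((Set.Ioo (-1 : ℝ) 1).indicator (fun _ => (1 : ℝ))) := by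
    rw [integrable_indicator_iff measurableSet_Ioo]
    simp
  have h2 : Integrable ((Set.Ioo (Real.exp (-1)) (Real.exp 1)).indicator (fun a : ℝ => a⁻¹)) := by
    rw [integrable_indicator_iff measurableSet_Ioo]
    exact invIntOn
  exact h1.mul_prod h2

lemma kdPos : 0 < ∫ y, kdAux y := by
  have : ∫ y, kdAux y = (∫ u, (Set.Ioo (-1 : ℝ) 1).indicator (fun _ => (1 : ℝ)) u) *
      ∫ a, (Set.Ioo (Real.exp (-1)) (Real.exp 1)).indicator (fun a : ℝ => a⁻¹) a :=
    integral_prod_mul _ _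
  rw [this, integral_indicator measurableSet_Ioo, integral_indicator measurableSet_Ioo,
    ← integral_Ioc_eq_integral_Ioo, ← integral_Ioc_eq_integral_Ioo,
    ← intervalIntegral.integral_of_le (by norm_num),
    ← intervalIntegral.integral_of_le (by simp),
    integral_inv_of_pos (Real.exp_pos _) (Real.exp_pos _)]
  rw [← Real.exp_sub]
  simp

lemma dens_meas : Measurable fun x : G =>
    ENNReal.ofReal (if 0 < x.2.2 then x.2.2⁻¹ else 0) := by
  apply Measurable.ennreal_ofReal
  exact Measurable.ite (measurableSet_lt measurable_const (by fun_prop)) (by fun_prop) (by fun_prop)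

lemma dens_eq (s : ℝ) (x : G) :
    (ENNReal.ofReal (if 0 < x.2.2 then x.2.2⁻¹ else 0)).toReal • HAux s x
      = (Set.Ioi s).indicator hAux x.1 * kdAux x.2 := by
  unfold HAux kAux kdAux
  by_cases h : x.2.2 ∈ Set.Ioo (Real.exp (-1)) (Real.exp 1)
  · have hp : 0 < x.2.2 := (Real.exp_pos _).trans h.1
    rw [if_pos hp, ENNReal.toReal_ofReal (by positivity)]
    simp only [Set.indicator_of_mem h, smul_eq_mul]
    ring
  · simp [Set.indicator_of_notMem h]

lemma HInt (s : ℝ) (hs : 3 ≤ s) : Integrable (HAux s) ρG := by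
  unfold ρG
  rw [integrable_withDensity_iff_integrable_smul' dens_meas (by simp)]
  simp only [dens_eq]
  exact ((integrable_indicator_iff measurableSet_Ioi).2 (hInt s hs)).mul_prod kdInt

lemma HIntegral (s : ℝ) (hs : 3 ≤ s) :
    ∫ x, HAux s x ∂ρG = 2 * Real.log s ^ (-(1 : ℝ)/2) * ∫ y, kdAux y := by
  unfold ρG
  rw [integral_withDensity_eq_integral_toReal_smul dens_meas (by simp)]
  simp only [dens_eq]
  rw [← hIntegral s hs, ← integral_indicator measurableSet_Ioi]
  exact integral_prod_mul _ _

lemma kAux_nonneg (y : ℝ × ℝ) : 0 ≤ kAux y := by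
  unfold kAux
  exact mul_nonneg (Set.indicator_nonneg (by simp) _) (Set.indicator_nonneg (by simp) _)

lemma HAux_nonneg (s : ℝ) (hs : 3 ≤ s) (x : G) : 0 ≤ HAux s x := by
  unfold HAux
  refine mul_nonneg (Set.indicator_nonneg (fun t ht => hAux_nonneg t ?_) _) (kAux_nonneg _)
  have : s < t := ht
  linarith

lemma f_eq (c0 : ℝ) (x : G) :
    fSpecial c0 x = HAux 3 x + R0set.indicator (fun _ => c0) x := by
  unfold fSpecial
  congr 1
  unfold HAux kAux domSpecial hAux
  simp only [Set.indicator, Set.mem_ofPred_eq, Set.mem_Ioi, Set.mem_Ioo, abs_lt]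
  split_ifs <;> first | (exfalso; tauto) | simp

lemma R0_meas : MeasurableSet R0set :=
  measurableSet_Icc.prod (measurableSet_Icc.prod measurableSet_Icc)

lemma R0_int (c0 : ℝ) : Integrable (R0set.indicator (fun _ => c0)) ρG := by
  rw [integrable_indicator_iff R0_meas]
  unfold ρG IntegrableOn
  rw [restrict_withDensity R0_meas, integrable_withDensity_iff_integrable_smul' dens_meas (by simp)]
  have hv : volume R0set < ⊤ := by
    have : IsCompact R0set := isCompact_Icc.prod (isCompact_Icc.prod isCompact_Icc)
    exact this.measure_lt_top
  have : IntegrableOn (fun _ : G => Real.exp 1 * |c0|) R0set volume := by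
    exact integrableOn_const hv.ne
  refine Integrable.mono' this ?_ ?_
  · exact ((dens_meas.ennreal_toReal).smul measurable_const).aestronglyMeasurable
  · filter_upwards [ae_restrict_mem R0_meas] with x hx
    have ha : Real.exp (-1) ≤ x.2.2 := hx.2.2.1
    have hp : 0 < x.2.2 := (Real.exp_pos _).trans_le ha
    rw [if_pos hp, ENNReal.toReal_ofReal (by positivity), norm_smul, Real.norm_eq_abs,
      Real.norm_eq_abs, abs_of_pos (by positivity)]
    gcongr
    rw [inv_le_comm₀ hp (Real.exp_pos _), ← Real.exp_neg]
    exact ha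

lemma R0_pos : ρG R0set ≠ 0 := by
  unfold ρG
  intro h
  rw [withDensity_apply_eq_zero dens_meas] at h
  have hsub : R0set ⊆ {x : G | ENNReal.ofReal (if 0 < x.2.2 then x.2.2⁻¹ else 0) ≠ 0} ∩ R0set := by
    intro x hx
    refine ⟨?_, hx⟩
    have hp : 0 < x.2.2 := (Real.exp_pos _).trans_le hx.2.2.1
    simp [hp]
  have h0 := measure_mono_null hsub h
  unfold R0set at h0
  rw [Measure.volume_eq_prod, Measure.prod_prod, Measure.volume_eq_prod, Measure.prod_prod] at h0
  simp only [Real.volume_Icc, mul_eq_zero, ENNReal.ofReal_eq_zero] at h0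
  have : Real.exp (-1) < Real.exp 1 := by simp
  rcases h0 with h0 | h0 | h0 <;> linarith

lemma f_int (c0 : ℝ) : Integrable (fSpecial c0) ρG := by
  have : fSpecial c0 = fun x => HAux 3 x + R0set.indicator (fun _ => c0) x := funext (f_eq c0)
  rw [this]
  exact (HInt 3 le_rfl).add (R0_int c0)

lemma c0_nonpos (c0 : ℝ) (h : (∫ x, fSpecial c0 x ∂ρG) = 0) : c0 ≤ 0 := by
  simp only [f_eq] at h
  rw [integral_add (HInt 3 le_rfl) (R0_int c0), integral_indicator R0_meas] at h
  have h1 : 0 ≤ ∫ x, HAux 3 x ∂ρG := integral_nonneg (HAux_nonneg 3 le_rfl)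
  have hfin : ρG R0set ≠ ⊤ := by
    have := R0_int 1
    rw [integrable_indicator_iff R0_meas, integrableOn_const_iff] at this
    rcases this with h | h
    · simp at h
    · exact h.ne
  simp only [integral_const, smul_eq_mul, measureReal_restrict_apply_univ] at h
  have hpos : 0 < ρG.real R0set := ENNReal.toReal_pos R0_pos hfin
  by_contra hc
  push Not at hc
  have := mul_pos hpos hc
  linarith

lemma gN_int (c0 : ℝ) (N : ℕ) : Integrable
    (fun x : G => min (max (Real.log |x.1|) (-(N : ℝ))) (N : ℝ) * fSpecial c0 x) ρG := by
  refine (f_int c0).bdd_mul (c := (N : ℝ)) ?_ ?_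
  · apply Measurable.aestronglyMeasurable
    have : Measurable fun x : G => |x.1| := measurable_fst.abs
    exact ((Real.measurable_log.comp this).max measurable_const).min measurable_const
  · refine ae_of_all _ fun x => ?_
    have : (0:ℝ) ≤ N := Nat.cast_nonneg N
    rw [Real.norm_eq_abs, abs_le]
    exact ⟨le_min (le_max_right _ _) (by linarith), min_le_right _ _⟩

lemma gN_lower (c0 : ℝ) (hc : c0 ≤ 0) (N : ℕ) (hN : 3 ≤ Real.exp N) (x : G) :
    N * HAux (Real.exp N) x ≤
      min (max (Real.log |x.1|) (-(N : ℝ))) (N : ℝ) * fSpecial c0 x := by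
  have hN0 : (0:ℝ) ≤ N := Nat.cast_nonneg N
  rw [f_eq, mul_add]
  have h2 : 0 ≤ min (max (Real.log |x.1|) (-(N : ℝ))) (N : ℝ) *
      R0set.indicator (fun _ => c0) x := by
    by_cases hx : x ∈ R0set
    · rw [Set.indicator_of_mem hx]
      refine mul_nonneg_of_nonpos_of_nonpos ?_ hc
      refine (min_le_left _ _).trans (max_le ?_ (by linarith))
      exact Real.log_nonpos (abs_nonneg _) (abs_le.2 hx.1)
    · simp [Set.indicator_of_notMem hx]
  have h1 : N * HAux (Real.exp N) x ≤
      min (max (Real.log |x.1|) (-(N : ℝ))) (N : ℝ) * HAux 3 x := by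
    by_cases hx : Real.exp N < x.1
    · have hx3 : 3 < x.1 := by linarith
      have e : HAux (Real.exp N) x = HAux 3 x := by
        unfold HAux
        rw [Set.indicator_of_mem (Set.mem_Ioi.2 hx), Set.indicator_of_mem (Set.mem_Ioi.2 hx3)]
      rw [e]
      refine mul_le_mul_of_nonneg_right ?_ (HAux_nonneg 3 le_rfl x)
      refine le_min (le_max_of_le_left ?_) le_rfl
      rw [abs_of_pos (by linarith), Real.le_log_iff_exp_le (by linarith)]
      exact hx.le
    · have e : HAux (Real.exp N) x = 0 := by
        unfold HAux
        rw [Set.indicator_of_notMem (by simpa using hx), zero_mul]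
      rw [e, mul_zero]
      by_cases hx3 : 3 < x.1
      · refine mul_nonneg ?_ (HAux_nonneg 3 le_rfl x)
        refine le_min (le_max_of_le_left ?_) hN0
        rw [abs_of_pos (by linarith)]
        exact Real.log_nonneg (by linarith)
      · have e : HAux 3 x = 0 := by
          unfold HAux
          rw [Set.indicator_of_notMem (by simpa using hx3), zero_mul]
        rw [e, mul_zero]
  linarith

theorem integral_gN_fSpecial_tendsto_atTop :
    ∀ c0 : ℝ, (∫ x, fSpecial c0 x ∂ρG) = 0 →
      Tendsto (fun N : ℕ =>
          ∫ x, min (max (Real.log |x.1|) (-(N : ℝ))) (N : ℝ) * fSpecial c0 x ∂ρG)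
        atTop atTop := by
  intro c0 h0
  have hc := c0_nonpos c0 h0
  have hlim : Tendsto (fun N : ℕ => (2 * ∫ y, kdAux y) * (N : ℝ) ^ ((1:ℝ)/2)) atTop atTop :=
    ((tendsto_rpow_atTop (by norm_num)).comp tendsto_natCast_atTop_atTop).const_mul_atTop
      (mul_pos two_pos kdPos)
  refine tendsto_atTop_mono' atTop ?_ hlim
  filter_upwards [eventually_ge_atTop 2] with N hN
  have hN' : (2:ℝ) ≤ N := by exact_mod_cast hN
  have h3 : 3 ≤ Real.exp N := by
    have := Real.add_one_le_exp (N : ℝ)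
    linarith
  calc (2 * ∫ y, kdAux y) * (N : ℝ) ^ ((1:ℝ)/2)
      = ∫ x, N * HAux (Real.exp N) x ∂ρG := by
        rw [integral_const_mul, HIntegral _ h3, Real.log_exp]
        have : (N : ℝ) ^ ((1:ℝ)/2) = N * (N : ℝ) ^ (-(1 : ℝ)/2) := by
          have hp : (0:ℝ) < N := by linarith
          nth_rewrite 2 [← Real.rpow_one (N : ℝ)]
          rw [← Real.rpow_add hp]
          norm_num
        rw [this]
        ring
    _ ≤ _ := integral_mono ((HInt _ h3).const_mul _) (gN_int c0 N) (gN_lower c0 hc N h3)
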